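/- Let f = h·conj(g) be a sense-preserving locally univalent logharmonic mapping on a simply connected domain with dilatation ω, and let φ be a locally univalent analytic function. Then P_f = Pφ (= φ''/φ') if and only if ω is a constant (1−k)/k with Re(k) > 1/2 and h = (cφ + d)^k for some complex constants c, d. -/

import Mathlib

/-!
If `P_f` equals the analytic function `φ''/φ'`, then `ω' * conj ω / (1 - |ω|²)`, the only term of
`P_f` that is not visibly holomorphic, is holomorphic. Away from the zeros of `ω'` this equation can
be solved for `conj ω` as a quotient of holomorphic functions, so `ω` and `conj ω` are both
holomorphic there, which is absurd; hence `ω` is a constant `a`, which is `(1 - k) / k` for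
`k = 1 / (1 + a)`, and the unit disc `|a| < 1` corresponds to the half-plane `1 / 2 < Re k`.

For `ω = (1 - k) / k` and `F = h ^ (1 / k)`, the power rule `h' = k F ^ (k - 1) F'` gives
`P_f = F''/F'`, and two locally univalent functions with the same pre-Schwarzian derivative differ
by an affine map.
-/

open Complex

/-- Second dilatation ω = g'h/(g h') of the logharmonic mapping h·conj g. -/
noncomputable def omegaOf (h g : ℂ → ℂ) (z : ℂ) : ℂ :=
  deriv g z * h z / (g z * deriv h z)

/-- Pre-Schwarzian derivative of the logharmonic mapping h·conj g. -/
noncomputable def preSch (h g : ℂ → ℂ) (z : ℂ) : ℂ :=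
  deriv (deriv h) z / deriv h z + omegaOf h g z * deriv h z / h z -
    deriv (omegaOf h g) z * (starRingEnd ℂ) (omegaOf h g z) /
      (1 - (‖omegaOf h g z‖ : ℂ) ^ 2)

open Set Topology ComplexConjugate

theorem deriv_eq_zero_of_differentiableAt_conj {w : ℂ → ℂ} {z : ℂ} (hw : DifferentiableAt ℂ w z)
    (hwc : DifferentiableAt ℂ (fun x ↦ conj (w x)) z) : deriv w z = 0 := by
  have hreal := hw.hasDerivAt.hasFDerivAt.restrictScalars ℝ
  have hreal_conj := hwc.hasDerivAt.hasFDerivAt.restrictScalars ℝ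
  have heq := (conjCLE.toContinuousLinearMap.hasFDerivAt.comp z hreal).unique hreal_conj
  have at_one : conj (deriv w z) = deriv (fun x ↦ conj (w x)) z := by
    simpa using DFunLike.congr_fun heq 1
  have at_I : -(I * conj (deriv w z)) = I * deriv (fun x ↦ conj (w x)) z := by
    simpa using DFunLike.congr_fun heq I
  have htwice : 2 * I * conj (deriv w z) = 0 := by
    linear_combination -at_I + I * at_one
  simpa using htwice

/-- The derivative `∂/∂z` of the potential `-log (1 - |w|²)` of the hyperbolic metric of the unit
disc pulled back by an analytic `w`. It is the part of `preSch` that is not holomorphic. -/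
noncomputable def discPotentialDz (w : ℂ → ℂ) (z : ℂ) : ℂ :=
  deriv w z * conj (w z) / (1 - (‖w z‖ : ℂ) ^ 2)

theorem one_sub_norm_sq_ne_zero {a : ℂ} (ha : ‖a‖ ≠ 1) : 1 - (‖a‖ : ℂ) ^ 2 ≠ 0 := by
  rw [sub_ne_zero, ne_comm]
  exact_mod_cast mt (pow_eq_one_iff_of_nonneg (norm_nonneg a) two_ne_zero).1 ha

theorem deriv_add_discPotentialDz_mul {w : ℂ → ℂ} {z : ℂ} (hz : ‖w z‖ ≠ 1) :
    deriv w z + discPotentialDz w z * w z = deriv w z / (1 - (‖w z‖ : ℂ) ^ 2) := by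
  have hne := one_sub_norm_sq_ne_zero hz
  rw [discPotentialDz]
  field_simp
  linear_combination deriv w z * mul_conj' (w z)

theorem conj_eq_discPotentialDz_div {w : ℂ → ℂ} {z : ℂ} (hz : ‖w z‖ ≠ 1) (hw' : deriv w z ≠ 0) :
    conj (w z) = discPotentialDz w z / (deriv w z + discPotentialDz w z * w z) := by
  have hne := one_sub_norm_sq_ne_zero hz
  rw [deriv_add_discPotentialDz_mul hz, discPotentialDz]
  field_simp

theorem deriv_eq_zero_of_differentiableAt_discPotentialDz {w : ℂ → ℂ} {z : ℂ}
    (hw : AnalyticAt ℂ w z) (hz : ‖w z‖ ≠ 1) (hD : DifferentiableAt ℂ (discPotentialDz w) z) :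
    deriv w z = 0 := by
  by_contra hw'
  have hden : deriv w z + discPotentialDz w z * w z ≠ 0 := by
    rw [deriv_add_discPotentialDz_mul hz]
    exact div_ne_zero hw' (one_sub_norm_sq_ne_zero hz)
  have hquot := hD.div (hw.deriv.differentiableAt.add (hD.mul hw.differentiableAt)) hden
  have hconj : (fun x ↦ conj (w x)) =ᶠ[𝓝 z]
      fun x ↦ discPotentialDz w x / (deriv w x + discPotentialDz w x * w x) := by
    filter_upwards [hw.continuousAt.norm.eventually_ne hz,
      hw.deriv.continuousAt.eventually_ne hw'] with x hx hx'
    exact conj_eq_discPotentialDz_div hx hx'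
  exact hw' (deriv_eq_zero_of_differentiableAt_conj hw.differentiableAt
    (hquot.congr_of_eventuallyEq hconj))

theorem preSch_eq_logDeriv (h g : ℂ → ℂ) (z : ℂ) :
    preSch h g z =
      logDeriv (deriv h) z + omegaOf h g z * logDeriv h z - discPotentialDz (omegaOf h g) z := by
  rw [preSch, discPotentialDz, logDeriv_apply, logDeriv_apply, mul_div_assoc (omegaOf h g z)]

theorem differentiableOn_logDeriv {U : Set ℂ} {f : ℂ → ℂ} (hU : IsOpen U)
    (hf : DifferentiableOn ℂ f U) (hf0 : ∀ z ∈ U, f z ≠ 0) : DifferentiableOn ℂ (logDeriv f) U :=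
  (hf.deriv hU).div hf hf0

section Dilatation

variable {U : Set ℂ} {h g : ℂ → ℂ}

theorem differentiableOn_omegaOf (hU : IsOpen U) (hh : DifferentiableOn ℂ h U)
    (hg : DifferentiableOn ℂ g U) (hg0 : ∀ z ∈ U, g z ≠ 0) (hh' : ∀ z ∈ U, deriv h z ≠ 0) :
    DifferentiableOn ℂ (omegaOf h g) U :=
  ((hg.deriv hU).mul hh).div (hg.mul (hh.deriv hU)) fun z hz ↦ mul_ne_zero (hg0 z hz) (hh' z hz)

theorem exists_omegaOf_eqOn_const_of_differentiableOn_preSch (hU : IsOpen U)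
    (hUc : IsPreconnected U) (hh : DifferentiableOn ℂ h U) (hg : DifferentiableOn ℂ g U)
    (hh0 : ∀ z ∈ U, h z ≠ 0) (hg0 : ∀ z ∈ U, g z ≠ 0) (hh' : ∀ z ∈ U, deriv h z ≠ 0)
    (hω : ∀ z ∈ U, ‖omegaOf h g z‖ ≠ 1) (hP : DifferentiableOn ℂ (preSch h g) U) :
    ∃ a, ∀ z ∈ U, omegaOf h g z = a := by
  have hωd := differentiableOn_omegaOf hU hh hg hg0 hh'
  have hD : DifferentiableOn ℂ (discPotentialDz (omegaOf h g)) U := by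
    refine (((differentiableOn_logDeriv hU (hh.deriv hU) hh').add
      (hωd.mul (differentiableOn_logDeriv hU hh hh0))).sub hP).congr fun z _ ↦ ?_
    simp [preSch_eq_logDeriv]
  exact hU.exists_is_const_of_deriv_eq_zero hUc hωd fun z hz ↦
    deriv_eq_zero_of_differentiableAt_discPotentialDz (hωd.analyticAt (hU.mem_nhds hz)) (hω z hz)
      (hD.differentiableAt (hU.mem_nhds hz))

end Dilatation

theorem one_half_lt_re_inv_one_add_iff {a : ℂ} : 1 / 2 < ((1 + a)⁻¹).re ↔ ‖a‖ < 1 := by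
  obtain rfl | ha := eq_or_ne a (-1)
  · norm_num
  have hpos : 0 < normSq (1 + a) := normSq_pos.2 fun h0 ↦ ha (eq_neg_of_add_eq_zero_right h0)
  rw [inv_re, div_lt_div_iff₀ two_pos hpos, ← sq_lt_one_iff₀ (norm_nonneg a),
    ← normSq_eq_norm_sq]
  simp only [normSq_apply, add_re, add_im, one_re, one_im]
  constructor <;> intro hlt <;> linarith

theorem exists_one_half_lt_re_and_eq_one_sub_div {a : ℂ} (ha : ‖a‖ < 1) :
    ∃ k : ℂ, 1 / 2 < k.re ∧ a = (1 - k) / k := by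
  have hre := one_half_lt_re_inv_one_add_iff.2 ha
  have hk : (1 + a)⁻¹ ≠ 0 := fun h0 ↦ by norm_num [h0] at hre
  exact ⟨(1 + a)⁻¹, hre, by rw [sub_div, div_self hk, one_div, inv_inv, add_sub_cancel_left]⟩

theorem exists_differentiableOn_cexp_eq {U : Set ℂ} {f : ℂ → ℂ} (hUc : IsSimplyConnected U)
    (hU : IsOpen U) (hf : DifferentiableOn ℂ f U) (hf0 : ∀ z ∈ U, f z ≠ 0) :
    ∃ L : ℂ → ℂ, DifferentiableOn ℂ L U ∧ ∀ z ∈ U, cexp (L z) = f z := by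
  obtain ⟨L, hLc, hL⟩ := exists_continuousOn_eqOn_exp_comp hUc hU hf.continuousOn
    (by rintro ⟨z, hz, hz0⟩; exact hf0 z hz hz0)
  refine ⟨L, fun z hz ↦ ?_, hL⟩
  have hzU := hU.mem_nhds hz
  exact (HasDerivAt.of_comp_left (hLc.continuousAt hzU) (hasDerivAt_exp (L z))
    (hf.differentiableAt hzU).hasDerivAt (exp_ne_zero _)
    (hL.eventuallyEq_of_mem hzU)).differentiableAt.differentiableWithinAt

theorem exists_differentiableOn_eq_cexp_const_mul {U : Set ℂ} {f : ℂ → ℂ}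
    (hUc : IsSimplyConnected U) (hU : IsOpen U) (hf : DifferentiableOn ℂ f U)
    (hf0 : ∀ z ∈ U, f z ≠ 0) {k : ℂ} (hk : k ≠ 0) :
    ∃ ℓ : ℂ → ℂ, DifferentiableOn ℂ ℓ U ∧ ∀ z ∈ U, f z = cexp (k * ℓ z) := by
  obtain ⟨L, hL, hexp⟩ := exists_differentiableOn_cexp_eq hUc hU hf hf0
  exact ⟨fun z ↦ L z / k, hL.div_const k, fun z hz ↦ by rw [mul_div_cancel₀ _ hk, hexp z hz]⟩

theorem eqOn_logDeriv_deriv_iff_exists_eqOn_affine {U : Set ℂ} {F φ : ℂ → ℂ} (hU : IsOpen U)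
    (hUc : IsPreconnected U) (hF : DifferentiableOn ℂ F U) (hφ : DifferentiableOn ℂ φ U)
    (hF' : ∀ z ∈ U, deriv F z ≠ 0) (hφ' : ∀ z ∈ U, deriv φ z ≠ 0) :
    EqOn (logDeriv (deriv F)) (logDeriv (deriv φ)) U ↔
      ∃ c d : ℂ, EqOn F (fun z ↦ c * φ z + d) U := by
  constructor
  · intro hlog
    obtain ⟨c, -, hc⟩ :=
      (logDeriv_eqOn_iff (hF.deriv hU) (hφ.deriv hU) hU hUc hφ' hF').1 hlog
    exact ⟨c, hU.exists_eq_add_of_deriv_eq hUc hF (hφ.const_mul c) fun z hz ↦ by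
      rw [hc hz, deriv_const_mul_field, Pi.smul_apply, smul_eq_mul]⟩
  · rintro ⟨c, d, hFφ⟩ z hz
    have hderiv : EqOn (deriv F) (fun x ↦ c * deriv φ x) U := fun x hx ↦ by
      rw [hFφ.deriv hU hx, deriv_add_const, deriv_const_mul_field]
    have hc : c ≠ 0 := left_ne_zero_of_mul (hderiv hz ▸ hF' z hz)
    rw [(logDeriv_congr_nhds (hderiv.eventuallyEq_of_mem (hU.mem_nhds hz))).eq_of_nhds,
      logDeriv_const_mul z c hc]

section Power

variable {ℓ : ℂ → ℂ} {z : ℂ}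

theorem logDeriv_cexp_comp (hℓ : DifferentiableAt ℂ ℓ z) :
    logDeriv (fun x ↦ cexp (ℓ x)) z = deriv ℓ z := by
  rw [logDeriv_apply, deriv_cexp hℓ, mul_div_cancel_left₀ _ (exp_ne_zero _)]

-- With `F = exp ∘ ℓ` this is the power rule `(F ^ k)' = k F ^ (k - 1) F'`.
theorem deriv_cexp_const_mul (hℓ : DifferentiableAt ℂ ℓ z) (k : ℂ) :
    deriv (fun x ↦ cexp (k * ℓ x)) z =
      k * (cexp ((k - 1) * ℓ z) * deriv (fun x ↦ cexp (ℓ x)) z) := by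
  have hsplit : cexp (k * ℓ z) = cexp ((k - 1) * ℓ z) * cexp (ℓ z) := by
    rw [← exp_add]; ring_nf
  rw [deriv_cexp (hℓ.const_mul k), deriv_cexp hℓ, deriv_const_mul_field, hsplit]
  ring

theorem logDeriv_deriv_cexp_const_mul (hℓ : AnalyticAt ℂ ℓ z) {k : ℂ} (hk : k ≠ 0)
    (hF' : deriv (fun x ↦ cexp (ℓ x)) z ≠ 0) :
    logDeriv (deriv fun x ↦ cexp (k * ℓ x)) z =
      (k - 1) * deriv ℓ z + logDeriv (deriv fun x ↦ cexp (ℓ x)) z := by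
  have hpow : (deriv fun x ↦ cexp (k * ℓ x)) =ᶠ[𝓝 z]
      fun x ↦ k * (cexp ((k - 1) * ℓ x) * deriv (fun x ↦ cexp (ℓ x)) x) := by
    filter_upwards [hℓ.eventually_analyticAt] with x hx
    exact deriv_cexp_const_mul hx.differentiableAt k
  have hℓk : DifferentiableAt ℂ (fun x ↦ (k - 1) * ℓ x) z := hℓ.differentiableAt.const_mul _
  rw [(logDeriv_congr_nhds hpow).eq_of_nhds, logDeriv_const_mul z k hk,
    logDeriv_mul (f := fun x ↦ cexp ((k - 1) * ℓ x)) z (exp_ne_zero _) hF' hℓk.cexp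
      hℓ.cexp.deriv.differentiableAt,
    logDeriv_cexp_comp hℓk, deriv_const_mul_field]

theorem preSch_eq_logDeriv_deriv_cexp {h g : ℂ → ℂ} {k : ℂ} (hℓ : AnalyticAt ℂ ℓ z) (hk : k ≠ 0)
    (hF' : deriv (fun x ↦ cexp (ℓ x)) z ≠ 0) (hh : h =ᶠ[𝓝 z] fun x ↦ cexp (k * ℓ x))
    (hω : omegaOf h g =ᶠ[𝓝 z] fun _ ↦ (1 - k) / k) :
    preSch h g z = logDeriv (deriv fun x ↦ cexp (ℓ x)) z := by
  have hD : discPotentialDz (omegaOf h g) z = 0 := by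
    rw [discPotentialDz, hω.deriv_eq, deriv_const, zero_mul, zero_div]
  rw [preSch_eq_logDeriv, hD, hω.eq_of_nhds, (logDeriv_congr_nhds hh).eq_of_nhds,
    (logDeriv_congr_nhds hh.deriv).eq_of_nhds, logDeriv_deriv_cexp_const_mul hℓ hk hF',
    logDeriv_cexp_comp (hℓ.differentiableAt.const_mul k), deriv_const_mul_field]
  field_simp
  ring

end Power

theorem eqOn_preSch_logDeriv_deriv_iff_exists_cexp_eq_affine {U : Set ℂ} {h g φ ℓ : ℂ → ℂ} {k : ℂ}
    (hU : IsOpen U) (hUc : IsPreconnected U) (hk : k ≠ 0) (hh' : ∀ z ∈ U, deriv h z ≠ 0)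
    (hφ : DifferentiableOn ℂ φ U) (hφ' : ∀ z ∈ U, deriv φ z ≠ 0) (hℓ : DifferentiableOn ℂ ℓ U)
    (hh : EqOn h (fun z ↦ cexp (k * ℓ z)) U) (hω : EqOn (omegaOf h g) (fun _ ↦ (1 - k) / k) U) :
    EqOn (preSch h g) (logDeriv (deriv φ)) U ↔
      ∃ c d : ℂ, EqOn (fun z ↦ cexp (ℓ z)) (fun z ↦ c * φ z + d) U := by
  have hF' : ∀ z ∈ U, deriv (fun x ↦ cexp (ℓ x)) z ≠ 0 := fun z hz ↦ by
    have hpow := hh' z hz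
    rw [hh.deriv hU hz, deriv_cexp_const_mul (hℓ.differentiableAt (hU.mem_nhds hz))] at hpow
    exact right_ne_zero_of_mul (right_ne_zero_of_mul hpow)
  have hP : EqOn (preSch h g) (logDeriv (deriv fun x ↦ cexp (ℓ x))) U := fun z hz ↦
    have hzU := hU.mem_nhds hz
    preSch_eq_logDeriv_deriv_cexp (hℓ.analyticAt hzU) hk (hF' z hz)
      (hh.eventuallyEq_of_mem hzU) (hω.eventuallyEq_of_mem hzU)
  rw [← eqOn_logDeriv_deriv_iff_exists_eqOn_affine hU hUc hℓ.cexp hφ hF' hφ']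
  exact ⟨hP.symm.trans, hP.trans⟩

theorem preSch_eq_analytic_preSch_iff
    (Ω : Set ℂ) (hΩ : IsOpen Ω) (hconn : IsPreconnected Ω)
    (hsc : SimplyConnectedSpace Ω)
    (h g : ℂ → ℂ)
    (hh : DifferentiableOn ℂ h Ω) (hg : DifferentiableOn ℂ g Ω)
    (hh0 : ∀ z ∈ Ω, h z ≠ 0) (hg0 : ∀ z ∈ Ω, g z ≠ 0)
    (hh' : ∀ z ∈ Ω, deriv h z ≠ 0)
    (hω : ∀ z ∈ Ω, ‖omegaOf h g z‖ < 1)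
    (φ : ℂ → ℂ) (hφ : DifferentiableOn ℂ φ Ω)
    (hφ' : ∀ z ∈ Ω, deriv φ z ≠ 0) :
    (∀ z ∈ Ω, preSch h g z = deriv (deriv φ) z / deriv φ z) ↔
    ∃ (k c d : ℂ) (ℓ : ℂ → ℂ),
      1 / 2 < k.re ∧
      (∀ z ∈ Ω, omegaOf h g z = (1 - k) / k) ∧
      DifferentiableOn ℂ ℓ Ω ∧
      (∀ z ∈ Ω, c * φ z + d ≠ 0) ∧
      (∀ z ∈ Ω, Complex.exp (ℓ z) = c * φ z + d) ∧
      (∀ z ∈ Ω, h z = Complex.exp (k * ℓ z)) := by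
  have ne_zero_of_re {k : ℂ} (hk : 1 / 2 < k.re) : k ≠ 0 := by rintro rfl; norm_num at hk
  constructor
  · intro hP
    obtain ⟨a, ha⟩ := exists_omegaOf_eqOn_const_of_differentiableOn_preSch hΩ hconn hh hg hh0 hg0
      hh' (fun z hz ↦ (hω z hz).ne) ((differentiableOn_logDeriv hΩ (hφ.deriv hΩ) hφ').congr hP)
    obtain ⟨z₀, hz₀⟩ := IsSimplyConnected.nonempty hsc
    obtain ⟨k, hk, rfl⟩ := exists_one_half_lt_re_and_eq_one_sub_div (ha z₀ hz₀ ▸ hω z₀ hz₀)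
    obtain ⟨ℓ, hℓ, hpow⟩ :=
      exists_differentiableOn_eq_cexp_const_mul hsc hΩ hh hh0 (ne_zero_of_re hk)
    obtain ⟨c, d, hcd⟩ := (eqOn_preSch_logDeriv_deriv_iff_exists_cexp_eq_affine hΩ hconn
      (ne_zero_of_re hk) hh' hφ hφ' hℓ hpow ha).1 hP
    exact ⟨k, c, d, ℓ, hk, ha, hℓ, fun z hz ↦ (hcd hz).symm.trans_ne (exp_ne_zero _), hcd, hpow⟩
  · rintro ⟨k, c, d, ℓ, hk, hωk, hℓ, -, hcd, hpow⟩
    exact (eqOn_preSch_logDeriv_deriv_iff_exists_cexp_eq_affine hΩ hconn (ne_zero_of_re hk) hh'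
      hφ hφ' hℓ hpow hωk).2 ⟨c, d, hcd⟩
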